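/- arXiv:0903.5519 — 2 statements merged into one kernel-verified Lean document; each statement's English description precedes it below -/
import Mathlib

section
/- Let d ∈ [−1/2, 0] and x ∈ [0, 2d+1]. Set f₁ = √((x+1)(d+1−x)/2) and g₁ = √(x(x−d)) (both square roots are of nonnegative quantities in this range), and let A(x) be the 5×5 real symmetric matrix with rows (0, 0, f₁, 0, f₁), (0, 0, 0, 0, g₁), (f₁, 0, 0, g₁, −d), (0, 0, g₁, 0, 0), (f₁, g₁, −d, 0, 0). Then every entry of A(x) is nonnegative, and the characteristic polynomial of A(x) equals t(t−1)(t−x)(t−(d−x))(t+d+1); in particular the eigenvalues of A(x), with multiplicity, are 1, x, 0, d−x, −d−1. -/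
open Polynomial Matrix

theorem det_aux (t f g d : ℝ[X]) :
    (!![t, 0, -f, 0, -f; 0, t, 0, 0, -g; -f, 0, t, -g, d; 0, 0, -g, t, 0; -f, -g, d, 0, t] :
      Matrix (Fin 5) (Fin 5) ℝ[X]).det
      = t * (t^2 + d*t - g^2 - 2*f^2) * (t^2 - d*t - g^2) := by
  simp [Matrix.det_succ_row_zero, Fin.sum_univ_succ, Fin.succAbove]
  ring

theorem stmt_17 (d x : ℝ) (hd : d ∈ Set.Icc (-1/2 : ℝ) 0)
    (hx : x ∈ Set.Icc (0:ℝ) (2*d + 1)) :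
    0 ≤ (x + 1)*(d + 1 - x)/2 ∧ 0 ≤ x*(x - d) ∧
    (let f₁ := Real.sqrt ((x + 1)*(d + 1 - x)/2);
     let g₁ := Real.sqrt (x*(x - d));
     let A : Matrix (Fin 5) (Fin 5) ℝ :=
       !![0,  0,  f₁, 0,  f₁;
          0,  0,  0,  0,  g₁;
          f₁, 0,  0,  g₁, -d;
          0,  0,  g₁, 0,  0;
          f₁, g₁, -d, 0,  0];
     (∀ i j, 0 ≤ A i j) ∧
     A.charpoly = X * (X - C 1) * (X - C x) * (X - C (d - x)) * (X + C (d + 1))) := by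
  obtain ⟨hd1, hd2⟩ := hd
  obtain ⟨hx1, hx2⟩ := hx
  have h1 : 0 ≤ (x + 1)*(d + 1 - x)/2 :=
    div_nonneg (mul_nonneg (by linarith) (by linarith)) (by norm_num)
  have h2 : 0 ≤ x*(x - d) := mul_nonneg hx1 (by linarith)
  refine ⟨h1, h2, ?_⟩
  intro f g A
  have hf : f^2 = (x + 1)*(d + 1 - x)/2 := Real.sq_sqrt h1
  have hg : g^2 = x*(x - d) := Real.sq_sqrt h2
  have hf0 : 0 ≤ f := Real.sqrt_nonneg _
  have hg0 : 0 ≤ g := Real.sqrt_nonneg _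
  clear_value f g
  constructor
  · intro i j
    fin_cases i <;> fin_cases j <;> simp [A, hf0, hg0, hd2]
  · have hM : A.charmatrix = !![X, 0, -C f, 0, -C f; 0, X, 0, 0, -C g;
        -C f, 0, X, -C g, C d; 0, 0, -C g, X, 0; -C f, -C g, C d, 0, X] := by
      ext1 i j
      fin_cases i <;> fin_cases j <;> simp [A, Matrix.charmatrix_apply]
    have e1 : (C g : ℝ[X])^2 = C x * (C x - C d) := by
      rw [← C_pow, hg]; simp
    have e2 : 2 * (C f : ℝ[X])^2 = (C x + 1) * (C d + 1 - C x) := by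
      rw [← C_pow]
      have : (2 : ℝ[X]) = C 2 := rfl
      rw [this, ← C_mul, hf, mul_div_cancel₀ _ (by norm_num)]; simp
    rw [Matrix.charpoly, hM, det_aux, e1, e2]
    simp only [C_sub, C_add, C_1]
    ring
end

section
/- Let d ∈ (−1/2, 0], let (x,y) lie in the triangle OBJ with y > 0, and set s₃ = s₃(x,y,d), u = √((−x² − xy + dx + dy + d + 1)/2), v = √((x+y)(x+1)(x−d)(x−d−1)(x+y+1)(x+y−d−1)). Let B(x,y) be 1/(2u²) times the 5×5 real symmetric matrix with rows (0, 0, 2u³, 0, 2u³), (0, 0, 0, (d+1)y, v), (2u³, 0, 0, v, s₃/3), (0, (d+1)y, v, 0, 0), (2u³, v, s₃/3, 0, 0). Then u > 0, v is the square root of a nonnegative quantity, and the characteristic polynomial of B(x,y) equals (t−1)(t−x)(t−y)(t−(d−x−y))(t+d+1); in particular the eigenvalues of B(x,y), with multiplicity, are 1, x, y, d−x−y, −d−1. -/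
open Polynomial Matrix

lemma det_aux_s18 (t a b c e : ℝ) :
    (Matrix.scalar (Fin 5) t - !![0,0,a,0,a;0,0,0,b,c;a,0,0,c,e;0,b,c,0,0;a,c,e,0,0]).det =
     t^5 - (2*a^2+b^2+2*c^2+e^2)*t^3 - 2*a^2*e*t^2
      + ((c^2-b*e)^2 + 2*a^2*(b^2+c^2))*t + 2*a^2*b*(b*e-c^2) := by
  have : (Matrix.scalar (Fin 5) t - !![0,0,a,0,a;0,0,0,b,c;a,0,0,c,e;0,b,c,0,0;a,c,e,0,0]) =
    !![t,0,-a,0,-a;0,t,0,-b,-c;-a,0,t,-c,-e;0,-b,-c,t,0;-a,-c,-e,0,t] := by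
    ext i j; fin_cases i <;> fin_cases j <;> simp
  rw [this]
  simp [Matrix.det_succ_row_zero, Fin.sum_univ_succ, Fin.succAbove]
  ring


open Polynomial Matrix

theorem stmt_18 (d x y : ℝ) (hd : d ∈ Set.Ioc (-1/2 : ℝ) 0)
    (hy0 : 0 < y) (hyx : y ≤ x) (hxy : y ≤ -x + 2*d + 1) :
    (let s₃ := 1 + x^3 + y^3 + (d - x - y)^3 + (-d - 1)^3;
     let u := Real.sqrt ((-x^2 - x*y + d*x + d*y + d + 1)/2);
     let v := Real.sqrt ((x + y)*(x + 1)*(x - d)*(x - d - 1)*(x + y + 1)*(x + y - d - 1));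
     let B : Matrix (Fin 5) (Fin 5) ℝ := (1/(2*u^2)) •
       !![0,      0,        2*u^3, 0,        2*u^3;
          0,      0,        0,     (d + 1)*y, v;
          2*u^3,  0,        0,     v,        s₃/3;
          0,      (d + 1)*y, v,    0,        0;
          2*u^3,  v,        s₃/3,  0,        0];
     0 < u ∧
     0 ≤ (x + y)*(x + 1)*(x - d)*(x - d - 1)*(x + y + 1)*(x + y - d - 1) ∧
     B.charpoly =
       (X - C 1) * (X - C x) * (X - C y) * (X - C (d - x - y)) * (X + C (d + 1))) := by
  obtain ⟨hd1, hd2⟩ := hd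
  intro s₃ u v B
  have hD : 0 < -x^2 - x*y + d*x + d*y + d + 1 := by
    have h1 : 0 < (x + y) * (2*d + 1 - x) := mul_pos (by linarith) (by linarith)
    have h2 : 0 ≤ (d + 1) * (2*d + 1 - x - y) := mul_nonneg (by linarith) (by linarith)
    nlinarith [mul_nonneg (by linarith : 0 ≤ x + y) (by linarith : 0 ≤ -d)]
  have hV : 0 ≤ (x + y)*(x + 1)*(x - d)*(x - d - 1)*(x + y + 1)*(x + y - d - 1) := by
    have h : 0 ≤ ((x + y)*(x + 1)*(x - d)*(x + y + 1)) * ((d + 1 - x)*(d + 1 - x - y)) := by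
      have : 0 ≤ x - d := by linarith
      have : 0 ≤ d + 1 - x := by linarith
      have : 0 ≤ d + 1 - x - y := by linarith
      have : 0 ≤ x := by linarith
      positivity
    linarith
  have hu : 0 < u := Real.sqrt_pos.2 (by linarith)
  have hu2 : u^2 = (-x^2 - x*y + d*x + d*y + d + 1)/2 := Real.sq_sqrt (by linarith)
  have hv2 : v^2 = (x + y)*(x + 1)*(x - d)*(x - d - 1)*(x + y + 1)*(x + y - d - 1) :=
    Real.sq_sqrt hV
  refine ⟨hu, hV, ?_⟩
  clear_value u v
  obtain ⟨D, hDe⟩ : ∃ D, D = -x^2 - x*y + d*x + d*y + d + 1 := ⟨_, rfl⟩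
  rw [← hDe] at hD hu2
  have hD0 : D ≠ 0 := hD.ne'
  have hB : B = !![0,0,u,0,u;0,0,0,(d+1)*y/D,v/D;u,0,0,v/D,s₃/3/D;
      0,(d+1)*y/D,v/D,0,0;u,v/D,s₃/3/D,0,0] := by
    have e1 : 1/(2*u^2) = D⁻¹ := by rw [hu2]; field_simp
    have e2 : D⁻¹ * (2*u^3) = u := by
      have : 2*u^3 = D*u := by rw [pow_succ, hu2]; ring
      rw [this]; field_simp
    simp only [B, e1]
    ext i j
    fin_cases i <;> fin_cases j <;> simp [e2, div_eq_inv_mul]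
  rw [hB]
  apply Polynomial.funext
  intro t
  rw [Matrix.eval_charpoly, det_aux_s18, hu2]
  have hc : (v/D)^2 = (d+1)*y/D*(s₃/3/D) - x*(d-x-y) := by
    rw [div_pow, hv2]; simp only [s₃]; field_simp; rw [hDe]; ring
  have h4 : 2*(D/2) + ((d+1)*y/D)^2 + 2*(v/D)^2 + (s₃/3/D)^2
      = (1 + x^2+y^2+(d-x-y)^2+(d+1)^2)/2 := by
    rw [div_pow v, hv2]; simp only [s₃]; field_simp; rw [hDe]; ring
  have h5 : D*(((d+1)*y/D)^2 + (v/D)^2) =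
      x*y*(d-x-y)*(-d-1) + y*(d-x-y)*(-d-1) + x*(d-x-y)*(-d-1) + x*y*(-d-1) + x*y*(d-x-y)
        - (x*(d-x-y))^2 := by
    rw [div_pow v, hv2]; field_simp; rw [hDe]; ring
  rw [h4]
  simp only [eval_mul, eval_sub, eval_add, eval_X, eval_C]
  have e1 : (v/D)^2 - (d+1)*y/D*(s₃/3/D) = -(x*(d-x-y)) := by linarith
  have e2 : (d+1)*y/D*(s₃/3/D) - (v/D)^2 = x*(d-x-y) := by linarith
  have e3 : 2*(D/2)*(((d+1)*y/D)^2 + (v/D)^2) = D*(((d+1)*y/D)^2 + (v/D)^2) := by ring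
  have e4 : 2*(D/2)*(s₃/3/D) = s₃/3 := by field_simp
  have e5 : 2*(D/2)*((d+1)*y/D) = (d+1)*y := by field_simp
  rw [e1, e2, e3, h5, e4, e5]
  simp only [s₃]
  ring
end
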